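/- Let N be a positive integer and t > -log N a real number. The sequence η_n(t,N) = Σ_{k=N}^n (1/(t+log(k+1/2)) - 1/(H_k - γ + t)) for n ≥ N is positive, strictly increasing, and bounded above by (1/24)∫_N^∞ dx/(x^2(t+log x)^2); consequently its limit η(t,N) as n → ∞ exists and is positive. -/

import Mathlib

open Real Filter MeasureTheory Finset Topology

/-- The sequence `η_n(t,N) = Σ_{k=N}^n (1/(t+log(k+1/2)) - 1/(H_k - γ + t))`. -/
noncomputable def eta (N : ℕ) (t : ℝ) (n : ℕ) : ℝ :=
  ∑ k ∈ Finset.Icc N n,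
    (1 / (t + Real.log ((k : ℝ) + 1/2)) -
      1 / ((harmonic k : ℝ) - Real.eulerMascheroniConstant + t))

/-!
With `δ_k = H_k - γ - log (k + 1/2)` and `a_k = t + log (k + 1/2)`, the `k`-th summand is
`1 / a_k - 1 / (a_k + δ_k)`, which lies strictly between `0` and `δ_k / a_k ^ 2`. The bound
`0 < δ_k < 1 / (24 (k + 1/2) ^ 2)` holds because `δ_k` and `1 / (24 (k + 1/2) ^ 2) - δ_k` both
tend to `0` and strictly decrease: `δ_k - δ_{k+1} = log ((1 + u) / (1 - u)) - 2 u` with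
`u = 1 / (2 (k + 1))`, which is expanded in powers of `u`. So the summand is less than `1/24`
times the value of `x ↦ 1 / (x ^ 2 (t + log x) ^ 2)` at the midpoint of `[k, k + 1]`; this function
is convex, so by the Hermite–Hadamard inequality the midpoint values sum to at most its integral.
-/

theorem lt_of_strictAnti_of_tendsto {α β : Type*} [TopologicalSpace α] [Preorder α]
    [OrderClosedTopology α] [PartialOrder β] [IsDirectedOrder β] [NoMaxOrder β] {f : β → α} {a : α}
    (hf : StrictAnti f) (ha : Tendsto f atTop (𝓝 a)) (b : β) : a < f b := by
  obtain ⟨c, hbc⟩ := exists_gt b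
  exact (hf.antitone.le_of_tendsto ha c).trans_lt (hf hbc)

theorem exists_tendsto_of_le_succ_of_le {α : Type*} [ConditionallyCompleteLinearOrder α]
    [TopologicalSpace α] [OrderTopology α] {u : ℕ → α} {N : ℕ} {B : α}
    (hu : ∀ n ≥ N, u n ≤ u (n + 1)) (hB : ∀ n ≥ N, u n ≤ B) :
    ∃ L, u N ≤ L ∧ Tendsto u atTop (𝓝 L) := by
  have hbdd : BddAbove (Set.range fun n ↦ u (n + N)) :=
    ⟨B, Set.forall_mem_range.2 fun n ↦ hB _ (N.le_add_left n)⟩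
  have hlim := tendsto_atTop_ciSup (monotone_add_nat_of_le_succ hu) hbdd
  refine ⟨⨆ n, u (n + N), ?_, (tendsto_add_atTop_iff_nat N).1 hlim⟩
  simpa only [zero_add] using le_ciSup hbdd 0

section ConvexMidpoint

variable {f : ℝ → ℝ}

theorem sub_mul_map_midpoint_le_integral_of_convexOn {a b : ℝ} (hab : a ≤ b)
    (hf : ConvexOn ℝ (Set.Icc a b) f) (hint : IntervalIntegrable f volume a b) :
    (b - a) * f ((a + b) / 2) ≤ ∫ x in a..b, f x := by
  have hint' : IntervalIntegrable (fun x ↦ f (a + b - x)) volume a b := by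
    simpa using (hint.comp_sub_left (a + b)).symm
  have hreflect : ∫ x in a..b, f (a + b - x) = ∫ x in a..b, f x := by simp
  have hmid : ∀ x ∈ Set.Icc a b, 2 * f ((a + b) / 2) ≤ f x + f (a + b - x) := by
    intro x hx
    have hx' : a + b - x ∈ Set.Icc a b := ⟨by linarith [hx.2], by linarith [hx.1]⟩
    have h := hf.2 hx hx' (by norm_num : (0 : ℝ) ≤ 1 / 2) (by norm_num : (0 : ℝ) ≤ 1 / 2)
      (by norm_num)
    simp only [smul_eq_mul] at h
    rw [show 1 / 2 * x + 1 / 2 * (a + b - x) = (a + b) / 2 by ring] at h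
    linarith
  have h := intervalIntegral.integral_mono_on hab intervalIntegrable_const (hint.add hint') hmid
  rw [intervalIntegral.integral_const, intervalIntegral.integral_add hint hint', hreflect,
    smul_eq_mul] at h
  linarith

theorem sum_Ico_map_add_half_le_integral_of_convexOn {m n : ℕ} (hmn : m ≤ n)
    (hf : ConvexOn ℝ (Set.Icc (m : ℝ) n) f) (hint : IntervalIntegrable f volume m n) :
    ∑ k ∈ Ico m n, f (k + 1 / 2) ≤ ∫ x in (m : ℝ)..n, f x := by
  have hsub : ∀ k ∈ Set.Ico m n, Set.Icc (k : ℝ) (k + 1 : ℕ) ⊆ Set.Icc m n := fun k hk ↦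
    Set.Icc_subset_Icc (mod_cast hk.1) (mod_cast hk.2)
  have hint' : ∀ k ∈ Set.Ico m n, IntervalIntegrable f volume k (k + 1 : ℕ) := fun k hk ↦
    hint.mono_set <| by
      rw [Set.uIcc_of_le (mod_cast k.le_succ), Set.uIcc_of_le (mod_cast hmn)]
      exact hsub k hk
  rw [← intervalIntegral.sum_integral_adjacent_intervals_Ico (a := (↑)) hmn hint']
  refine sum_le_sum fun k hk ↦ ?_
  have hk' : k ∈ Set.Ico m n := by simpa using hk
  have h := sub_mul_map_midpoint_le_integral_of_convexOn (mod_cast k.le_succ)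
    (hf.subset (hsub k hk') (convex_Icc _ _)) (hint' k hk')
  rw [Nat.cast_succ, add_sub_cancel_left, one_mul,
    show ((k : ℝ) + (k + 1)) / 2 = k + 1 / 2 by ring] at h
  rwa [Nat.cast_succ]

theorem sum_Ico_map_add_half_le_integral_Ioi_of_convexOn {m : ℕ}
    (hf : ConvexOn ℝ (Set.Ici (m : ℝ)) f) (hint : IntegrableOn f (Set.Ioi m))
    (hf₀ : ∀ x ∈ Set.Ioi (m : ℝ), 0 ≤ f x) (n : ℕ) :
    ∑ k ∈ Ico m n, f (k + 1 / 2) ≤ ∫ x in Set.Ioi (m : ℝ), f x := by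
  rcases le_or_gt n m with hnm | hmn
  · simpa [Ico_eq_empty_of_le hnm] using setIntegral_nonneg measurableSet_Ioi hf₀
  have hmn' : (m : ℝ) ≤ n := mod_cast hmn.le
  calc ∑ k ∈ Ico m n, f (k + 1 / 2) ≤ ∫ x in (m : ℝ)..n, f x :=
        sum_Ico_map_add_half_le_integral_of_convexOn hmn.le
          (hf.subset Set.Icc_subset_Ici_self (convex_Icc _ _))
          ((intervalIntegrable_iff_integrableOn_Ioc_of_le hmn').2
            (hint.mono_set Set.Ioc_subset_Ioi_self))
    _ = ∫ x in Set.Ioc (m : ℝ) n, f x := intervalIntegral.integral_of_le hmn'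
    _ ≤ ∫ x in Set.Ioi (m : ℝ), f x :=
        setIntegral_mono_set hint (ae_restrict_of_forall_mem measurableSet_Ioi hf₀)
          Set.Ioc_subset_Ioi_self.eventuallyLE

end ConvexMidpoint

section HarmonicLogGap

theorem log_one_add_div_one_sub_lt {u : ℝ} (hu₀ : 0 < u) (hu₁ : u < 1) :
    log ((1 + u) / (1 - u)) < 2 * u + 2 / 3 * u ^ 3 / (1 - u ^ 2) ^ 2 := by
  have htaylor := log_div_le_sum_range_add hu₀.le hu₁ 3
  simp only [sum_range_succ, range_zero, sum_empty] at htaylor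
  norm_num at htaylor
  have hpos : 0 < 1 - u ^ 2 := by nlinarith
  have hdiff : u ^ 3 / (3 * (1 - u ^ 2) ^ 2) - (u ^ 3 / 3 + u ^ 5 / 5 + u ^ 7 / (1 - u ^ 2)) =
      u ^ 5 * (7 - 14 * u ^ 2 + 12 * u ^ 4) / (15 * (1 - u ^ 2) ^ 2) := by
    field_simp
    ring
  have hnum : 0 < 7 - 14 * u ^ 2 + 12 * u ^ 4 := by nlinarith [sq_nonneg (u ^ 2 - 7 / 12)]
  have hdiff_pos : 0 < u ^ 5 * (7 - 14 * u ^ 2 + 12 * u ^ 4) / (15 * (1 - u ^ 2) ^ 2) := by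
    positivity
  have hrw : 2 / 3 * u ^ 3 / (1 - u ^ 2) ^ 2 = 2 * (u ^ 3 / (3 * (1 - u ^ 2) ^ 2)) := by
    field_simp
  linarith

variable {m : ℝ}

theorem one_div_lt_log_add_half_sub_log_sub_half (hm : 1 / 2 < m) :
    1 / m < log (m + 1 / 2) - log (m - 1 / 2) := by
  have hpos : 0 < m - 1 / 2 := by linarith
  have hpos' : 0 < 2 * m - 1 := by linarith
  have hlhs : 2 * (1 / (m - 1 / 2)) / (1 / (m - 1 / 2) + 2) = 1 / m := by
    field_simp
    ring
  have harg : 1 + 1 / (m - 1 / 2) = (m + 1 / 2) / (m - 1 / 2) := by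
    rw [one_add_div hpos.ne', show m - 1 / 2 + 1 = m + 1 / 2 by ring]
  calc 1 / m = 2 * (1 / (m - 1 / 2)) / (1 / (m - 1 / 2) + 2) := hlhs.symm
    _ < log (1 + 1 / (m - 1 / 2)) := lt_log_one_add_of_pos (one_div_pos.2 hpos)
    _ = log (m + 1 / 2) - log (m - 1 / 2) := by rw [harg, log_div (by linarith) hpos.ne']

theorem log_add_half_sub_log_sub_half_lt (hm : 1 / 2 < m) :
    log (m + 1 / 2) - log (m - 1 / 2) <
      1 / m + (1 / (24 * (m - 1 / 2) ^ 2) - 1 / (24 * (m + 1 / 2) ^ 2)) := by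
  have hm₀ : 0 < m := by linarith
  have hsub : 0 < 2 * m - 1 := by linarith
  have h := log_one_add_div_one_sub_lt (u := 1 / (2 * m)) (by positivity)
    ((div_lt_one (by positivity)).2 (by linarith))
  have harg : (m + 1 / 2) / (m - 1 / 2) = (1 + 1 / (2 * m)) / (1 - 1 / (2 * m)) := by
    rw [show m + 1 / 2 = m * (1 + 1 / (2 * m)) by field_simp,
      show m - 1 / 2 = m * (1 - 1 / (2 * m)) by field_simp, mul_div_mul_left _ _ hm₀.ne']
  have herr : 2 / 3 * (1 / (2 * m)) ^ 3 / (1 - (1 / (2 * m)) ^ 2) ^ 2 =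
      1 / (24 * (m - 1 / 2) ^ 2) - 1 / (24 * (m + 1 / 2) ^ 2) := by
    rw [show m + 1 / 2 = (2 * m + 1) / 2 by ring, show m - 1 / 2 = (2 * m - 1) / 2 by ring,
      show 1 - (1 / (2 * m)) ^ 2 = (2 * m - 1) * (2 * m + 1) / (4 * m ^ 2) by field_simp; ring]
    field_simp
    ring
  rw [← log_div (by linarith) (by linarith), harg, ← herr]
  convert h using 2
  field_simp

/-- The error `H_k - γ - log (k + 1/2)` of the midpoint-shifted logarithmic approximation to the
harmonic numbers. -/
noncomputable def harmonicLogGap (k : ℕ) : ℝ :=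
  harmonic k - eulerMascheroniConstant - log (k + 1 / 2)

theorem tendsto_harmonicLogGap : Tendsto harmonicLogGap atTop (𝓝 0) := by
  have hshift : Tendsto (fun k : ℕ ↦ log (k + 1 / 2) - log k) atTop (𝓝 0) :=
    (tendsto_log_comp_add_sub_log (1 / 2)).comp tendsto_natCast_atTop_atTop
  have h := (tendsto_harmonic_sub_log.sub hshift).sub_const eulerMascheroniConstant
  simp only [sub_zero, sub_self] at h
  refine h.congr fun k ↦ ?_
  rw [harmonicLogGap]
  ring

theorem harmonicLogGap_sub_succ (k : ℕ) :
    harmonicLogGap k - harmonicLogGap (k + 1) =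
      log ((k + 1 : ℝ) + 1 / 2) - log ((k + 1 : ℝ) - 1 / 2) - 1 / (k + 1 : ℝ) := by
  rw [harmonicLogGap, harmonicLogGap, harmonic_succ,
    show (k + 1 : ℝ) - 1 / 2 = k + 1 / 2 by ring]
  push_cast
  ring

theorem strictAnti_harmonicLogGap : StrictAnti harmonicLogGap :=
  strictAnti_nat_of_succ_lt fun k ↦ by
    have hk : (1 / 2 : ℝ) < k + 1 := by linarith [k.cast_nonneg (α := ℝ)]
    linarith [harmonicLogGap_sub_succ k, one_div_lt_log_add_half_sub_log_sub_half hk]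

theorem harmonicLogGap_pos (k : ℕ) : 0 < harmonicLogGap k :=
  lt_of_strictAnti_of_tendsto strictAnti_harmonicLogGap tendsto_harmonicLogGap k

theorem harmonicLogGap_lt (k : ℕ) : harmonicLogGap k < 1 / (24 * (k + 1 / 2) ^ 2) := by
  have hanti : StrictAnti fun k : ℕ ↦ 1 / (24 * (k + 1 / 2 : ℝ) ^ 2) - harmonicLogGap k := by
    refine strictAnti_nat_of_succ_lt fun k ↦ ?_
    have hk : (1 / 2 : ℝ) < k + 1 := by linarith [k.cast_nonneg (α := ℝ)]
    have h := log_add_half_sub_log_sub_half_lt hk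
    rw [show (k + 1 : ℝ) - 1 / 2 = k + 1 / 2 by ring] at h
    have hdiff := harmonicLogGap_sub_succ k
    rw [show (k + 1 : ℝ) - 1 / 2 = k + 1 / 2 by ring] at hdiff
    push_cast
    linarith
  have hbound : Tendsto (fun k : ℕ ↦ 1 / (24 * (k + 1 / 2 : ℝ) ^ 2)) atTop (𝓝 0) := by
    refine tendsto_const_nhds.div_atTop (Tendsto.const_mul_atTop (by norm_num) ?_)
    exact (tendsto_pow_atTop two_ne_zero).comp
      (tendsto_atTop_add_const_right _ _ tendsto_natCast_atTop_atTop)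
  have hlim := hbound.sub tendsto_harmonicLogGap
  rw [sub_zero] at hlim
  exact sub_pos.1 (lt_of_strictAnti_of_tendsto hanti hlim k)

end HarmonicLogGap

theorem convexOn_inv_of_concaveOn {𝕜 E : Type*} [Field 𝕜] [LinearOrder 𝕜]
    [IsStrictOrderedRing 𝕜] [AddCommMonoid E] [Module 𝕜 E] {s : Set E} {f : E → 𝕜}
    (hf : ConcaveOn 𝕜 s f) (hf₀ : ∀ x ∈ s, 0 < f x) : ConvexOn 𝕜 s fun x ↦ (f x)⁻¹ := by
  have hinv : ConvexOn 𝕜 (Set.Ioi 0) fun y : 𝕜 ↦ y⁻¹ := by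
    simpa only [zpow_neg_one] using convexOn_zpow (𝕜 := 𝕜) (-1)
  refine ⟨hf.1, fun x hx y hy a b ha hb hab ↦ ?_⟩
  have hpos : 0 < a • f x + b • f y := (convex_Ioi (0 : 𝕜)) (hf₀ x hx) (hf₀ y hy) ha hb hab
  calc (f (a • x + b • y))⁻¹ ≤ (a • f x + b • f y)⁻¹ := inv_anti₀ hpos (hf.2 hx hy ha hb hab)
    _ ≤ a • (f x)⁻¹ + b • (f y)⁻¹ := hinv.2 (hf₀ x hx) (hf₀ y hy) ha hb hab

/-- The function whose midpoint values, divided by `24`, majorize the summands of `eta`. It is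
studied on `(exp (-t), ∞)`, where `t + log x` is positive. -/
noncomputable def etaMajorant (t x : ℝ) : ℝ := 1 / (x ^ 2 * (t + log x) ^ 2)

section EtaMajorant

variable {t x a : ℝ}

theorem add_log_pos (hx : exp (-t) < x) : 0 < t + log x := by
  linarith [(lt_log_iff_exp_lt ((exp_pos _).trans hx)).2 hx]

theorem etaMajorant_nonneg (t x : ℝ) : 0 ≤ etaMajorant t x := by
  rw [etaMajorant]
  positivity

theorem convexOn_etaMajorant (t : ℝ) : ConvexOn ℝ (Set.Ioi (exp (-t))) (etaMajorant t) := by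
  have hsub : Set.Ioi (exp (-t)) ⊆ Set.Ioi 0 := Set.Ioi_subset_Ioi (exp_pos _).le
  have hinv_nonneg : ∀ x ∈ Set.Ioi (exp (-t)), 0 ≤ x⁻¹ := fun x hx ↦ (inv_pos.2 (hsub hx)).le
  have hlog_nonneg : ∀ x ∈ Set.Ioi (exp (-t)), 0 ≤ (t + log x)⁻¹ := fun x hx ↦
    (inv_pos.2 (add_log_pos hx)).le
  have hinv : ConvexOn ℝ (Set.Ioi (exp (-t))) fun x ↦ x⁻¹ :=
    convexOn_inv_of_concaveOn (concaveOn_id (convex_Ioi _)) hsub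
  have hlog : ConvexOn ℝ (Set.Ioi (exp (-t))) fun x ↦ (t + log x)⁻¹ :=
    convexOn_inv_of_concaveOn
      ((concaveOn_const t (convex_Ioi _)).add
        (strictConcaveOn_log_Ioi.concaveOn.subset hsub (convex_Ioi _)))
      fun x hx ↦ add_log_pos hx
  have hinv_anti : AntitoneOn (fun x : ℝ ↦ x⁻¹) (Set.Ioi (exp (-t))) := fun x hx y _ hxy ↦
    inv_anti₀ (hsub hx) hxy
  have hlog_anti : AntitoneOn (fun x ↦ (t + log x)⁻¹) (Set.Ioi (exp (-t))) := fun x hx y _ hxy ↦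
    inv_anti₀ (add_log_pos hx) (by gcongr; exact hsub hx)
  have hsq := (hinv.mul hlog hinv_nonneg hlog_nonneg (hinv_anti.monovaryOn hlog_anti)).pow
    (fun x hx ↦ mul_nonneg (hinv_nonneg x hx) (hlog_nonneg x hx)) 2
  refine hsq.congr fun x _ ↦ ?_
  simp only [etaMajorant, Pi.pow_apply, Pi.mul_apply, mul_pow, inv_pow, one_div, mul_inv]

theorem etaMajorant_le_rpow (ha : exp (-t) < a) (hx : a ≤ x) :
    etaMajorant t x ≤ 1 / (t + log a) ^ 2 * x ^ (-2 : ℝ) := by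
  have ha₀ : 0 < a := (exp_pos _).trans ha
  have hx₀ : 0 < x := ha₀.trans_le hx
  have hlog : 0 < t + log a := add_log_pos ha
  rw [etaMajorant, rpow_neg hx₀.le, rpow_two, ← one_div, one_div_mul_one_div, mul_comm]
  gcongr

theorem integrableOn_etaMajorant (ha : exp (-t) < a) :
    IntegrableOn (etaMajorant t) (Set.Ioi a) := by
  have hdom := (integrableOn_Ioi_rpow_of_lt (a := -2) (by norm_num)
    ((exp_pos _).trans ha)).const_mul (1 / (t + log a) ^ 2)
  have hcont : ContinuousOn (etaMajorant t) (Set.Ioi a) :=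
    ((convexOn_etaMajorant t).continuousOn isOpen_Ioi).mono (Set.Ioi_subset_Ioi ha.le)
  refine hdom.mono' (hcont.aestronglyMeasurable measurableSet_Ioi) ?_
  filter_upwards [ae_restrict_mem measurableSet_Ioi] with x hx
  rw [norm_of_nonneg (etaMajorant_nonneg t x)]
  exact etaMajorant_le_rpow ha (le_of_lt hx)

theorem sum_etaMajorant_le_integral {N : ℕ} (hN : exp (-t) < N) (n : ℕ) :
    ∑ k ∈ Icc N n, etaMajorant t (k + 1 / 2) ≤ ∫ x in Set.Ioi (N : ℝ), etaMajorant t x := by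
  rw [← Ico_add_one_right_eq_Icc]
  exact sum_Ico_map_add_half_le_integral_Ioi_of_convexOn
    ((convexOn_etaMajorant t).subset (Set.Ici_subset_Ioi.2 hN) (convex_Ici _))
    (integrableOn_etaMajorant hN) (fun x _ ↦ etaMajorant_nonneg t x) _

end EtaMajorant

/-- The `k`-th summand of `eta`. -/
noncomputable def etaTerm (t : ℝ) (k : ℕ) : ℝ :=
  1 / (t + log (k + 1 / 2)) - 1 / (harmonic k - eulerMascheroniConstant + t)

section EtaTerm

variable {t : ℝ} {k : ℕ}

theorem etaTerm_eq (hk : exp (-t) < k + 1 / 2) :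
    etaTerm t k = harmonicLogGap k /
      ((t + log (k + 1 / 2)) * (t + log (k + 1 / 2) + harmonicLogGap k)) := by
  have ha := add_log_pos hk
  have hδ := harmonicLogGap_pos k
  rw [etaTerm, show (harmonic k : ℝ) - eulerMascheroniConstant + t =
    t + log (k + 1 / 2) + harmonicLogGap k by rw [harmonicLogGap]; ring]
  rw [div_sub_div _ _ ha.ne' (by positivity)]
  ring

theorem etaTerm_pos (hk : exp (-t) < k + 1 / 2) : 0 < etaTerm t k := by
  have ha := add_log_pos hk
  have hδ := harmonicLogGap_pos k
  rw [etaTerm_eq hk]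
  positivity

theorem etaTerm_lt (hk : exp (-t) < k + 1 / 2) :
    etaTerm t k < 1 / 24 * etaMajorant t (k + 1 / 2) := by
  have ha := add_log_pos hk
  have hδ := harmonicLogGap_pos k
  calc etaTerm t k
      = harmonicLogGap k / ((t + log (k + 1 / 2)) * (t + log (k + 1 / 2) + harmonicLogGap k)) :=
        etaTerm_eq hk
    _ < harmonicLogGap k / (t + log (k + 1 / 2)) ^ 2 := by
        rw [sq]
        exact div_lt_div_of_pos_left hδ (by positivity)
          (mul_lt_mul_of_pos_left (lt_add_of_pos_right _ hδ) ha)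
    _ < 1 / (24 * (k + 1 / 2) ^ 2) / (t + log (k + 1 / 2)) ^ 2 := by
        gcongr
        exact harmonicLogGap_lt k
    _ = 1 / 24 * etaMajorant t (k + 1 / 2) := by
        rw [etaMajorant]
        field_simp

end EtaTerm

section Eta

variable {t : ℝ} {N : ℕ}

theorem exp_neg_lt_add_half {k : ℕ} (hN : exp (-t) < N) (hk : N ≤ k) : exp (-t) < k + 1 / 2 := by
  linarith [show (N : ℝ) ≤ k from mod_cast hk]

theorem eta_pos {n : ℕ} (hN : exp (-t) < N) (hn : N ≤ n) : 0 < eta N t n :=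
  sum_pos (fun _ hk ↦ etaTerm_pos (exp_neg_lt_add_half hN (mem_Icc.1 hk).1)) (nonempty_Icc.2 hn)

theorem eta_lt_eta_succ {n : ℕ} (hN : exp (-t) < N) (hn : N ≤ n) :
    eta N t n < eta N t (n + 1) := by
  have hn' : N ≤ n + 1 := hn.trans n.le_succ
  rw [eta, eta, sum_Icc_succ_top hn']
  exact lt_add_of_pos_right _ (etaTerm_pos (exp_neg_lt_add_half hN hn'))

theorem eta_le_integral (hN : exp (-t) < N) (n : ℕ) :
    eta N t n ≤ 1 / 24 * ∫ x in Set.Ioi (N : ℝ), etaMajorant t x :=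
  calc eta N t n ≤ ∑ k ∈ Icc N n, 1 / 24 * etaMajorant t (k + 1 / 2) :=
        sum_le_sum fun _ hk ↦ (etaTerm_lt (exp_neg_lt_add_half hN (mem_Icc.1 hk).1)).le
    _ = 1 / 24 * ∑ k ∈ Icc N n, etaMajorant t (k + 1 / 2) := (mul_sum ..).symm
    _ ≤ 1 / 24 * ∫ x in Set.Ioi (N : ℝ), etaMajorant t x := by
        grw [sum_etaMajorant_le_integral hN n]

end Eta

theorem stmt_8 (N : ℕ) (hN : 0 < N) (t : ℝ) (ht : -Real.log N < t) :
    (∀ n : ℕ, N ≤ n → 0 < eta N t n) ∧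
    (∀ n : ℕ, N ≤ n → eta N t n < eta N t (n + 1)) ∧
    (∀ n : ℕ, N ≤ n →
      eta N t n ≤ (1/24) * ∫ x in Set.Ioi (N : ℝ), 1 / (x^2 * (t + Real.log x)^2)) ∧
    ∃ L : ℝ, 0 < L ∧ Filter.Tendsto (eta N t) Filter.atTop (𝓝 L) := by
  have hNt : exp (-t) < N := (lt_log_iff_exp_lt (mod_cast hN)).1 (neg_lt.1 ht)
  obtain ⟨L, hL, hlim⟩ := exists_tendsto_of_le_succ_of_le
    (fun n hn ↦ (eta_lt_eta_succ hNt hn).le) (fun n _ ↦ eta_le_integral hNt n)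
  exact ⟨fun n hn ↦ eta_pos hNt hn, fun n hn ↦ eta_lt_eta_succ hNt hn,
    fun n _ ↦ eta_le_integral hNt n, L, (eta_pos hNt le_rfl).trans_le hL, hlim⟩
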